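/- There is a ∗-algebra isomorphism θ: U_q(e₂)⋉O(E_q(2)) → O(E_q(2))⋊U_q(e₂) determined on generators by θ(v) = v, θ(n) = n*, θ(K) = K⁻¹, θ(E) = F (hence θ(v*) = v*, θ(n*) = n, θ(K⁻¹) = K, θ(F) = E), and the map given by the same formulas in the opposite direction is its inverse. -/

import Mathlib

/-- The defining relations of the left cross product ∗-algebra `U_q(e₂) ⋉ O(E_q(2))` on
elements `v, n, E, F, K, K'` (`K'` playing the role of `K⁻¹`) of a ∗-algebra over ℂ,
including the involution conditions `K* = K`, `K'* = K'`, `E* = F`. -/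
def Eq2LeftRel {A : Type} [Ring A] [Algebra ℂ A] [StarRing A]
    (q : ℝ) (v n E F K K' : A) : Prop :=
  star K = K ∧ star K' = K' ∧ star E = F ∧
  star v * v = 1 ∧ v * star v = 1 ∧ n * star n = star n * n ∧
  n * v = (q : ℂ) • (v * n) ∧
  K * K' = 1 ∧ K' * K = 1 ∧
  K * F = (q : ℂ) • (F * K) ∧ K * E = (q : ℂ)⁻¹ • (E * K) ∧ E * F = F * E ∧
  v * F = (Real.sqrt q : ℂ) • (F * v) ∧
  v * E = (Real.sqrt q : ℂ) • (E * v) ∧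
  v * K = (Real.sqrt q : ℂ) • (K * v) ∧
  star v * F = (Real.sqrt q : ℂ)⁻¹ • (F * star v) ∧
  star v * E = (Real.sqrt q : ℂ)⁻¹ • (E * star v) ∧
  star v * K = (Real.sqrt q : ℂ)⁻¹ • (K * star v) ∧
  n * F = (Real.sqrt q : ℂ) • (F * n) + K' * star v ∧
  n * E = (Real.sqrt q : ℂ) • (E * n) ∧
  n * K = (Real.sqrt q : ℂ) • (K * n) ∧
  star n * F = (Real.sqrt q : ℂ)⁻¹ • (F * star n) ∧
  star n * E = (Real.sqrt q : ℂ)⁻¹ • (E * star n) - (q : ℂ)⁻¹ • (K' * v) ∧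
  star n * K = (Real.sqrt q : ℂ)⁻¹ • (K * star n)

/-- The defining relations of the right cross product ∗-algebra `O(E_q(2)) ⋊ U_q(e₂)`. -/
def Eq2RightRel {B : Type} [Ring B] [Algebra ℂ B] [StarRing B]
    (q : ℝ) (v n E F K K' : B) : Prop :=
  star K = K ∧ star K' = K' ∧ star E = F ∧
  star v * v = 1 ∧ v * star v = 1 ∧ n * star n = star n * n ∧
  n * v = (q : ℂ) • (v * n) ∧
  K * K' = 1 ∧ K' * K = 1 ∧
  K * F = (q : ℂ) • (F * K) ∧ K * E = (q : ℂ)⁻¹ • (E * K) ∧ E * F = F * E ∧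
  F * v = (Real.sqrt q : ℂ)⁻¹ • (v * F) ∧
  E * v = (Real.sqrt q : ℂ)⁻¹ • (v * E) ∧
  K * v = (Real.sqrt q : ℂ) • (v * K) ∧
  F * star v = (Real.sqrt q : ℂ) • (star v * F) ∧
  E * star v = (Real.sqrt q : ℂ) • (star v * E) ∧
  K * star v = (Real.sqrt q : ℂ)⁻¹ • (star v * K) ∧
  F * n = (Real.sqrt q : ℂ) • (n * F) + v * K ∧
  E * n = (Real.sqrt q : ℂ) • (n * E) ∧
  K * n = (Real.sqrt q : ℂ)⁻¹ • (n * K) ∧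
  F * star n = (Real.sqrt q : ℂ)⁻¹ • (star n * F) ∧
  E * star n = (Real.sqrt q : ℂ)⁻¹ • (star n * E) - (q : ℂ)⁻¹ • (star v * K) ∧
  K * star n = (Real.sqrt q : ℂ) • (star n * K)

/-- `A` together with the elements `v, n, E, F, K, K'` is the universal unital
ℂ-∗-algebra on these generators subject to the relations of `U_q(e₂) ⋉ O(E_q(2))`. -/
def IsUniversalEq2Left (q : ℝ) (A : Type) [Ring A] [Algebra ℂ A] [StarRing A]
    [StarModule ℂ A] (v n E F K K' : A) : Prop :=
  Eq2LeftRel q v n E F K K' ∧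
  ∀ (B : Type) [Ring B] [Algebra ℂ B] [StarRing B] [StarModule ℂ B],
    ∀ v' n' E' F' L L' : B, Eq2LeftRel q v' n' E' F' L L' →
      ∃! φ : A →⋆ₐ[ℂ] B,
        φ v = v' ∧ φ n = n' ∧ φ E = E' ∧ φ F = F' ∧ φ K = L ∧ φ K' = L'

/-- `B` together with `v, n, E, F, K, K'` is the universal unital ℂ-∗-algebra subject to
the relations of `O(E_q(2)) ⋊ U_q(e₂)`. -/
def IsUniversalEq2Right (q : ℝ) (B : Type) [Ring B] [Algebra ℂ B] [StarRing B]
    [StarModule ℂ B] (v n E F K K' : B) : Prop :=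
  Eq2RightRel q v n E F K K' ∧
  ∀ (C : Type) [Ring C] [Algebra ℂ C] [StarRing C] [StarModule ℂ C],
    ∀ v' n' E' F' L L' : C, Eq2RightRel q v' n' E' F' L L' →
      ∃! φ : B →⋆ₐ[ℂ] C,
        φ v = v' ∧ φ n = n' ∧ φ E = E' ∧ φ F = F' ∧ φ K = L ∧ φ K' = L'

/-!
Both families of relations say that generators commute up to a power of `q^(1/2)`, except for the
two relations of each that involve `n` and `F`, or `n*` and `E`. Exchanging `E` with `F`, `K` with
`K⁻¹` and `n` with `n*` turns each commutation relation of one family into one of the other: those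
with `E` or `F` are read from right to left, those with `K` are conjugated by `K⁻¹`. In the
exceptional relations, solving for the other product scales the additive term by `-q^(-1/2)`, and
reordering its two factors scales it by `q^(-1/2)` again, which accounts for the coefficients `1`
and `-q⁻¹`. The two universal properties then provide homomorphisms in both directions, inverse to
each other on generators.
-/

/-- `x` and `y` commute up to the scalar `c`. The relations of this shape in `Eq2LeftRel` and
`Eq2RightRel` are definitionally instances of this notion. -/
def QCommute {R A : Type*} [Mul A] [SMul R A] (c : R) (x y : A) : Prop :=
  x * y = c • (y * x)

theorem qCommute_iff_of_mul_eq_one {R A : Type*} [CommSemiring R] [Semiring A] [Algebra R A]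
    {c : R} {x x' y : A} (hxx' : x * x' = 1) (hx'x : x' * x = 1) :
    QCommute c x y ↔ QCommute c y x' := by
  constructor <;> intro h
  · calc y * x' = x' * (x * y) * x' := by rw [← mul_assoc, hx'x, one_mul]
      _ = x' * (c • (y * x)) * x' := by rw [h]
      _ = c • (x' * y) := by
        rw [mul_smul_comm, smul_mul_assoc, mul_assoc, mul_assoc, hxx', mul_one]
  · calc x * y = x * (y * x') * x := by rw [mul_assoc, mul_assoc, hx'x, mul_one]
      _ = x * (c • (x' * y)) * x := by rw [h]
      _ = c • (y * x) := by
        rw [mul_smul_comm, smul_mul_assoc, ← mul_assoc x, hxx', one_mul]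

theorem qCommute_inv_iff {𝕜 A : Type*} [GroupWithZero 𝕜] [Mul A] [MulAction 𝕜 A] {c : 𝕜}
    {x y : A} (hc : c ≠ 0) : QCommute c⁻¹ x y ↔ QCommute c y x :=
  eq_comm.trans (inv_smul_eq_iff₀ hc)

theorem QCommute.star_left {R A : Type*} [CommSemiring R] [StarRing R] [Semiring A] [StarRing A]
    [Algebra R A] [StarModule R A] {c : R} {x u : A} (hc : IsSelfAdjoint c) (hu : u ∈ unitary A)
    (h : QCommute c x u) : QCommute c (star x) u := by
  have h_star : QCommute c (star u) (star x) := by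
    simpa only [QCommute, star_mul, star_smul, hc.star_eq] using congrArg star h
  exact (qCommute_iff_of_mul_eq_one (Unitary.star_mul_self_of_mem hu)
    (Unitary.mul_star_self_of_mem hu)).mp h_star

theorem mul_eq_smul_mul_add_iff {𝕜 A : Type*} [Field 𝕜] [Ring A] [Algebra 𝕜 A] {r p : 𝕜}
    {x y z w : A} (hr : r ≠ 0) (hp : r * r = p) (hz : z = r⁻¹ • w) :
    x * y = r • (y * x) + z ↔ y * x = r⁻¹ • (x * y) - p⁻¹ • w := by
  have hw : p⁻¹ • w = r⁻¹ • z := by rw [hz, smul_smul, ← mul_inv, hp]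
  rw [hw, ← smul_sub, eq_inv_smul_iff₀ hr, eq_sub_iff_add_eq, eq_comm]

theorem ofReal_sqrt_ne_zero {q : ℝ} (hq : 0 < q) : (√q : ℂ) ≠ 0 :=
  Complex.ofReal_ne_zero.mpr (Real.sqrt_ne_zero'.mpr hq)

theorem ofReal_sqrt_mul_self {q : ℝ} (hq : 0 ≤ q) : (√q : ℂ) * √q = q :=
  mod_cast Real.mul_self_sqrt hq

section Relations

variable {A : Type} [Ring A] [Algebra ℂ A] [StarRing A] [StarModule ℂ A] {q : ℝ}
  {v n E F K K' : A}

theorem Eq2RightRel.to_left (hq : 0 < q) (h : Eq2RightRel q v n E F K K') :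
    Eq2LeftRel q v (star n) F E K' K := by
  obtain ⟨star_K, star_K', star_E, v_left, v_right, n_normal, nv, KK', K'K, KF, KE, EF,
    Fv, Ev, Kv, Fv', Ev', Kv', Fn, En, Kn, Fn', En', Kn'⟩ := h
  have hr : (√q : ℂ) ≠ 0 := ofReal_sqrt_ne_zero hq
  have hrq : (√q : ℂ) * √q = q := ofReal_sqrt_mul_self hq.le
  have hq' : (q : ℂ) ≠ 0 := Complex.ofReal_ne_zero.mpr hq.ne'
  have conj_K {c : ℂ} {x : A} : QCommute c K x ↔ QCommute c x K' :=
    qCommute_iff_of_mul_eq_one KK' K'K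
  have vK : v * K = (√q : ℂ)⁻¹ • (K * v) := (qCommute_inv_iff hr).mpr Kv
  rw [Eq2LeftRel, star_star]
  exact ⟨star_K', star_K, by rw [← star_E, star_star], v_left, v_right, n_normal.symm,
    QCommute.star_left (Complex.conj_ofReal q) ⟨v_left, v_right⟩ nv, K'K, KK',
    (qCommute_inv_iff hq').mp (conj_K.mp KE), (qCommute_inv_iff hq').mpr (conj_K.mp KF), EF.symm,
    (qCommute_inv_iff hr).mp Ev, (qCommute_inv_iff hr).mp Fv, conj_K.mp Kv,
    (qCommute_inv_iff hr).mpr Ev', (qCommute_inv_iff hr).mpr Fv', conj_K.mp Kv',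
    (mul_eq_smul_mul_add_iff hr hrq Kv').mpr En', (qCommute_inv_iff hr).mp Fn', conj_K.mp Kn',
    (qCommute_inv_iff hr).mpr En, (mul_eq_smul_mul_add_iff hr hrq vK).mp Fn, conj_K.mp Kn⟩

theorem Eq2LeftRel.to_right (hq : 0 < q) (h : Eq2LeftRel q v n E F K K') :
    Eq2RightRel q v (star n) F E K' K := by
  obtain ⟨star_K, star_K', star_E, v_left, v_right, n_normal, nv, KK', K'K, KF, KE, EF,
    vF, vE, vK, v'F, v'E, v'K, nF, nE, nK, n'F, n'E, n'K⟩ := h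
  have hr : (√q : ℂ) ≠ 0 := ofReal_sqrt_ne_zero hq
  have hrq : (√q : ℂ) * √q = q := ofReal_sqrt_mul_self hq.le
  have hq' : (q : ℂ) ≠ 0 := Complex.ofReal_ne_zero.mpr hq.ne'
  have conj_K {c : ℂ} {x : A} : QCommute c x K ↔ QCommute c K' x :=
    (qCommute_iff_of_mul_eq_one K'K KK').symm
  have K'v' : K' * star v = (√q : ℂ)⁻¹ • (star v * K') := conj_K.mp v'K
  have vK' : v * K' = (√q : ℂ)⁻¹ • (K' * v) := (qCommute_inv_iff hr).mpr (conj_K.mp vK)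
  rw [Eq2RightRel, star_star]
  exact ⟨star_K', star_K, by rw [← star_E, star_star], v_left, v_right, n_normal.symm,
    QCommute.star_left (Complex.conj_ofReal q) ⟨v_left, v_right⟩ nv, K'K, KK',
    conj_K.mp ((qCommute_inv_iff hq').mp KE), conj_K.mp ((qCommute_inv_iff hq').mpr KF), EF.symm,
    (qCommute_inv_iff hr).mpr vE, (qCommute_inv_iff hr).mpr vF, conj_K.mp vK,
    (qCommute_inv_iff hr).mp v'E, (qCommute_inv_iff hr).mp v'F, K'v',
    (mul_eq_smul_mul_add_iff hr hrq vK').mpr n'E, (qCommute_inv_iff hr).mp n'F, conj_K.mp n'K,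
    (qCommute_inv_iff hr).mpr nE, (mul_eq_smul_mul_add_iff hr hrq K'v').mp nF, conj_K.mp nK⟩

theorem IsUniversalEq2Left.eq_id (h : IsUniversalEq2Left q A v n E F K K') {f : A →⋆ₐ[ℂ] A}
    (hf : f v = v ∧ f n = n ∧ f E = E ∧ f F = F ∧ f K = K ∧ f K' = K') :
    f = StarAlgHom.id ℂ A :=
  (h.2 A v n E F K K' h.1).unique hf ⟨rfl, rfl, rfl, rfl, rfl, rfl⟩

theorem IsUniversalEq2Right.eq_id (h : IsUniversalEq2Right q A v n E F K K') {f : A →⋆ₐ[ℂ] A}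
    (hf : f v = v ∧ f n = n ∧ f E = E ∧ f F = F ∧ f K = K ∧ f K' = K') :
    f = StarAlgHom.id ℂ A :=
  (h.2 A v n E F K K' h.1).unique hf ⟨rfl, rfl, rfl, rfl, rfl, rfl⟩

end Relations

theorem stmt_3_general (q : ℝ) (hq : 0 < q)
    (A : Type) [Ring A] [Algebra ℂ A] [StarRing A] [StarModule ℂ A]
    (B : Type) [Ring B] [Algebra ℂ B] [StarRing B] [StarModule ℂ B]
    (v n E F K K' : A) (v' n' E' F' L L' : B)
    (hA : IsUniversalEq2Left q A v n E F K K')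
    (hB : IsUniversalEq2Right q B v' n' E' F' L L') :
    ∃ θ : A ≃⋆ₐ[ℂ] B,
      θ v = v' ∧ θ n = star n' ∧ θ K = L' ∧ θ E = F' ∧
      θ (star v) = star v' ∧ θ (star n) = n' ∧ θ K' = L ∧ θ F = E' ∧
      θ.symm v' = v ∧ θ.symm n' = star n ∧ θ.symm L = K' ∧ θ.symm F' = E ∧
      θ.symm (star v') = star v ∧ θ.symm (star n') = n ∧
      θ.symm L' = K ∧ θ.symm E' = F := by
  obtain ⟨φ, ⟨φv, φn, φE, φF, φK, φK'⟩, -⟩ := hA.2 B _ _ _ _ _ _ (hB.1.to_left hq)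
  obtain ⟨ψ, ⟨ψv, ψn, ψE, ψF, ψK, ψK'⟩, -⟩ := hB.2 A _ _ _ _ _ _ (hA.1.to_right hq)
  have ψφ : ψ.comp φ = StarAlgHom.id ℂ A := hA.eq_id <| by
    simp only [StarAlgHom.comp_apply, map_star, star_star, φv, φn, φE, φF, φK, φK',
      ψv, ψn, ψE, ψF, ψK, ψK', and_self]
  have φψ : φ.comp ψ = StarAlgHom.id ℂ B := hB.eq_id <| by
    simp only [StarAlgHom.comp_apply, map_star, star_star, φv, φn, φE, φF, φK, φK',
      ψv, ψn, ψE, ψF, ψK, ψK', and_self]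
  refine ⟨StarAlgEquiv.ofStarAlgHom φ ψ ψφ φψ, ?_⟩
  simp only [StarAlgEquiv.ofStarAlgHom_apply, StarAlgEquiv.ofStarAlgHom_symm_apply, map_star,
    star_star, φv, φn, φE, φF, φK, φK', ψv, ψn, ψE, ψF, ψK, ψK', and_self]

/-- There is a ∗-algebra isomorphism
`θ : U_q(e₂) ⋉ O(E_q(2)) → O(E_q(2)) ⋊ U_q(e₂)` with `θ(v) = v`, `θ(n) = n*`,
`θ(K) = K⁻¹`, `θ(E) = F` (hence `θ(v*) = v*`, `θ(n*) = n`, `θ(K⁻¹) = K`, `θ(F) = E`),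
whose inverse is given by the same formulas in the opposite direction. -/
theorem stmt_3 (q : ℝ) (hq0 : 0 < q) (hq1 : q < 1)
    (A : Type) [Ring A] [Algebra ℂ A] [StarRing A] [StarModule ℂ A]
    (B : Type) [Ring B] [Algebra ℂ B] [StarRing B] [StarModule ℂ B]
    (v n E F K K' : A) (v' n' E' F' L L' : B)
    (hA : IsUniversalEq2Left q A v n E F K K')
    (hB : IsUniversalEq2Right q B v' n' E' F' L L') :
    ∃ θ : A ≃⋆ₐ[ℂ] B,
      θ v = v' ∧ θ n = star n' ∧ θ K = L' ∧ θ E = F' ∧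
      θ (star v) = star v' ∧ θ (star n) = n' ∧ θ K' = L ∧ θ F = E' ∧
      θ.symm v' = v ∧ θ.symm n' = star n ∧ θ.symm L = K' ∧ θ.symm F' = E ∧
      θ.symm (star v') = star v ∧ θ.symm (star n') = n ∧
      θ.symm L' = K ∧ θ.symm E' = F :=
  stmt_3_general q hq0 A B v n E F K K' v' n' E' F' L L' hA hB
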